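/- For every finite set P of n points in ℝ², there exist points a, b ∈ P such that every closed disk D with |D ∩ P| > (2/3)·n contains a or b. In other words, every finite planar point set admits a strong (2/3)-net of size 2 with respect to disks. -/

import Mathlib

/-- A disk in ℝ²: a closed ball with nonnegative radius. -/
def IsDisk (D : Set (EuclideanSpace ℝ (Fin 2))) : Prop :=
  ∃ (c : EuclideanSpace ℝ (Fin 2)) (r : ℝ), 0 ≤ r ∧ D = Metric.closedBall c r

/-!
Let `x` be a centerpoint of `P ⊆ ℝᵈ`: by Helly's theorem some `x` lies in the convex hull of
`D ∩ P` for every heavy `D`, that is, one containing more than `d / (d + 1)` of the points of `P`.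
Let `S ⊆ P` be the vertex set of a Delaunay simplex containing `x`. A ball `D` meets the vertex set of a Delaunay face
`F` as soon as the convex hulls of `D ∩ P` and of `F` intersect, because the power of a point with
respect to `D` is affine on the lift to the paraboloid, and the lift of `F` lies on the lower hull.

In particular every heavy ball meets `S`, which settles the case `#S ≤ d`. If `#S = d + 1` and no
facet of `S` is a net, choose for every `z ∈ S` a heavy ball `D z` missing `S \ {z}`. These
`d + 1` balls have a point `p ∈ P` in common. It lies outside the simplex, so the segment from `x`
to `p` leaves the simplex through a facet `S \ {z}`. As this segment stays in the convex hull of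
`D z ∩ P`, the ball `D z` meets `S \ {z}` after all.
-/

open Finset Module Metric

section StrongNets

variable {α : Type*}

/-- `T` contains more than the proportion `ε` of the points of `P`: the sets which an `ε`-net of
`P` has to hit. -/
def IsHeavy (ε : ℝ) (P : Finset α) (T : Set α) : Prop :=
  ε * #P < ((T ∩ P).ncard : ℝ)

/-- `Q` is a strong `ε`-net of `P` with respect to the family `𝒮`; strong means `Q ⊆ P`. -/
def IsStrongNet (ε : ℝ) (P Q : Finset α) (𝒮 : Set (Set α)) : Prop :=
  Q ⊆ P ∧ ∀ T ∈ 𝒮, IsHeavy ε P T → (T ∩ Q).Nonempty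

lemma IsHeavy.card_filter_notMem_lt {ε : ℝ} {P : Finset α} {T : Set α} [DecidablePred (· ∉ T)]
    (h : IsHeavy ε P T) : (#{p ∈ P | p ∉ T} : ℝ) < (1 - ε) * #P := by
  have hdiff : (P : Set α) \ T = ({p ∈ P | p ∉ T} : Finset α) := by ext; simp
  have hsum := Set.ncard_inter_add_ncard_sdiff_eq_ncard (P : Set α) T P.finite_toSet
  rw [hdiff, Set.ncard_coe_finset, Set.ncard_coe_finset, Set.inter_comm] at hsum
  rw [IsHeavy] at h
  have : ((T ∩ P).ncard : ℝ) + #{p ∈ P | p ∉ T} = #P := mod_cast hsum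
  linarith

lemma exists_mem_forall_mem_of_isHeavy {ι : Type*} {P : Finset α} (hP : P.Nonempty) {k : ℕ}
    {I : Finset ι} (hI : #I ≤ k + 1) {T : ι → Set α}
    (hT : ∀ i ∈ I, IsHeavy (k / (k + 1)) P (T i)) : ∃ p ∈ P, ∀ i ∈ I, p ∈ T i := by
  classical
  by_contra! hcover
  have hcover' : P ⊆ I.biUnion fun i ↦ {p ∈ P | p ∉ T i} := fun p hp ↦ by
    simpa [hp] using hcover p hp
  have hIne : I.Nonempty := by
    obtain ⟨p, hp⟩ := hP
    exact (hcover p hp).imp fun _ h ↦ h.1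
  refine lt_irrefl (#P : ℝ) ?_
  calc (#P : ℝ) ≤ ∑ i ∈ I, (#{p ∈ P | p ∉ T i} : ℝ) :=
        mod_cast (card_le_card hcover').trans card_biUnion_le
    _ < ∑ _i ∈ I, (1 - k / (k + 1) : ℝ) * #P :=
        sum_lt_sum_of_nonempty hIne fun i hi ↦ (hT i hi).card_filter_notMem_lt
    _ = #I * (#P / (k + 1)) := by
        rw [sum_const, nsmul_eq_mul]
        field_simp
        ring
    _ ≤ (k + 1) * (#P / (k + 1)) := by gcongr; exact_mod_cast hI
    _ = #P := by field_simp

end StrongNets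

section Convexity

variable {E : Type*} [AddCommGroup E] [Module ℝ E]

lemma exists_mem_convexHull_mem_openSegment {S : Finset E} {w : E → ℝ} (hw : ∀ y ∈ S, 0 < w y)
    (hw₁ : ∑ y ∈ S, w y = 1) {q : E} (hq : q ∈ convexHull ℝ (S : Set E)) :
    ∃ y ∈ convexHull ℝ (S : Set E), ∑ y ∈ S, w y • y ∈ openSegment ℝ q y := by
  obtain ⟨v, hv, hv₁, rfl⟩ := Finset.mem_convexHull'.1 hq
  have hS : S.Nonempty := nonempty_of_sum_ne_zero (hw₁.trans_ne one_ne_zero)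
  obtain ⟨m, hm, hmin⟩ := S.exists_min_image w hS
  have hwm : w m ≤ 1 := hw₁ ▸ single_le_sum (fun y hy ↦ (hw y hy).le) hm
  have hε : 0 < w m / 2 := half_pos (hw m hm)
  have hε₁ : 0 < 1 - w m / 2 := by linarith
  have hvw : ∀ y ∈ S, 0 ≤ w y - w m / 2 * v y := fun y hy ↦ by
    have hvy : v y ≤ 1 := hv₁ ▸ single_le_sum hv hy
    nlinarith [hmin y hy]
  refine ⟨∑ y ∈ S, ((1 - w m / 2)⁻¹ * (w y - w m / 2 * v y)) • y,
    (convex_convexHull ℝ _).sum_mem (fun y hy ↦ mul_nonneg (inv_nonneg.2 hε₁.le) (hvw y hy)) ?_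
      (fun y hy ↦ subset_convexHull ℝ _ hy), w m / 2, 1 - w m / 2, hε, hε₁, by ring, ?_⟩
  · rw [← mul_sum, sum_sub_distrib, ← mul_sum, hw₁, hv₁, mul_one, inv_mul_cancel₀ hε₁.ne']
  · rw [smul_sum, smul_sum, ← sum_add_distrib]
    refine sum_congr rfl fun y _ ↦ ?_
    rw [smul_smul, smul_smul, mul_inv_cancel_left₀ hε₁.ne', ← add_smul, add_sub_cancel]

lemma exists_subset_forall_mem_openSegment {s : Set E} {x : E} (hx : x ∈ convexHull ℝ s) :
    ∃ S ⊆ s, x ∈ convexHull ℝ S ∧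
      ∀ q ∈ convexHull ℝ S, ∃ y ∈ convexHull ℝ S, x ∈ openSegment ℝ q y := by
  classical
  rw [convexHull_eq_union_convexHull_finite_subsets] at hx
  simp only [Set.mem_iUnion] at hx
  obtain ⟨t, hts, hxt⟩ := hx
  obtain ⟨w, hw, hw₁, rfl⟩ := Finset.mem_convexHull'.1 hxt
  have hpos : ∀ y ∈ ({y ∈ t | w y ≠ 0} : Finset E), 0 < w y := fun y hy ↦
    (hw y (mem_filter.1 hy).1).lt_of_ne' (mem_filter.1 hy).2
  have hsum : ∑ y ∈ t with w y ≠ 0, w y = 1 := (sum_filter_ne_zero t).trans hw₁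
  have hcomb : ∑ y ∈ t with w y ≠ 0, w y • y = ∑ y ∈ t, w y • y :=
    sum_filter_of_ne fun y _ ↦ left_ne_zero_of_smul
  refine ⟨({y ∈ t | w y ≠ 0} : Finset E), (coe_subset.2 (filter_subset _ t)).trans hts,
    Finset.mem_convexHull'.2 ⟨w, fun y hy ↦ (hpos y hy).le, hsum, hcomb⟩, fun q hq ↦ ?_⟩
  exact hcomb ▸ exists_mem_convexHull_mem_openSegment hpos hsum hq

variable {ι : Type*} [Finite ι]

lemma mem_convexHull_image_compl_of_coord_eq_zero (b : AffineBasis ι ℝ E) {q : E}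
    (hq : ∀ j, 0 ≤ b.coord j q) {i : ι} (hi : b.coord i q = 0) :
    q ∈ convexHull ℝ (b '' {i}ᶜ) := by
  classical
  have := Fintype.ofFinite ι
  have hsum : ∑ j ∈ univ.erase i, b.coord j q = 1 := by
    rw [sum_erase (f := fun j ↦ b.coord j q) univ hi, b.sum_coord_apply_eq_one]
  have hcomb : ∑ j ∈ univ.erase i, b.coord j q • b j = q := by
    rw [sum_erase univ (by rw [hi, zero_smul]), b.linear_combination_coord_eq_self]
  rw [← hcomb]
  exact (convex_convexHull ℝ _).sum_mem (fun j _ ↦ hq j) hsum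
    fun j hj ↦ subset_convexHull ℝ _ ⟨j, ne_of_mem_erase hj, rfl⟩

lemma exists_mem_segment_mem_convexHull_image_compl (b : AffineBasis ι ℝ E) {x p : E}
    (hx : x ∈ convexHull ℝ (Set.range b)) (hp : p ∉ convexHull ℝ (Set.range b)) :
    ∃ i, ∃ q ∈ segment ℝ x p, q ∈ convexHull ℝ (b '' {i}ᶜ) := by
  classical
  have := Fintype.ofFinite ι
  simp only [b.convexHull_eq_nonneg_coord, Set.mem_ofPred_eq, not_forall, not_le] at hx hp
  -- `crossing j` is the parameter at which the segment from `x` to `p` crosses `b.coord j = 0`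
  let crossing (j : ι) : ℝ := b.coord j x / (b.coord j x - b.coord j p)
  obtain ⟨i, hi, hmin⟩ := exists_min_image {j | b.coord j p < 0} crossing
    (by simpa [Finset.Nonempty])
  simp only [mem_filter_univ] at hi hmin
  have hpos : ∀ j, b.coord j p < 0 → 0 < b.coord j x - b.coord j p := fun j hj ↦ by
    linarith [hx j]
  have hcrossing : 0 ≤ crossing i := div_nonneg (hx i) (hpos i hi).le
  have hcrossing₁ : crossing i ≤ 1 := (div_le_one (hpos i hi)).2 (by linarith)
  have hcoord (j : ι) : b.coord j (AffineMap.lineMap x p (crossing i)) =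
      b.coord j x - crossing i * (b.coord j x - b.coord j p) := by
    rw [AffineMap.apply_lineMap, AffineMap.lineMap_apply_ring']
    ring
  refine ⟨i, AffineMap.lineMap x p (crossing i), ?_,
    mem_convexHull_image_compl_of_coord_eq_zero b (fun j ↦ ?_) ?_⟩
  · exact segment_eq_image_lineMap ℝ x p ▸ ⟨crossing i, ⟨hcrossing, hcrossing₁⟩, rfl⟩
  · rw [hcoord, sub_nonneg]
    rcases lt_or_ge (b.coord j p) 0 with hj | hj
    · exact (le_div_iff₀ (hpos j hj)).1 (hmin j hj)
    · nlinarith [hx j]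
  · rw [hcoord, div_mul_cancel₀ _ (hpos i hi).ne', sub_self]

lemma exists_mem_segment_mem_convexHull_erase [FiniteDimensional ℝ E] [DecidableEq E]
    {S : Finset E} (hind : AffineIndependent ℝ ((↑) : S → E)) (hcard : #S = finrank ℝ E + 1)
    {x p : E} (hx : x ∈ convexHull ℝ (S : Set E)) (hp : p ∉ convexHull ℝ (S : Set E)) :
    ∃ z ∈ S, ∃ q ∈ segment ℝ x p, q ∈ convexHull ℝ (S.erase z : Set E) := by
  let b : AffineBasis S ℝ E :=
    ⟨(↑), hind, hind.affineSpan_eq_top_iff_card_eq_finrank_add_one.2 (by simpa using hcard)⟩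
  have hrange : Set.range b = S := Subtype.range_coe
  obtain ⟨⟨z, hz⟩, q, hq, hqz⟩ :=
    exists_mem_segment_mem_convexHull_image_compl b (hrange ▸ hx) (hrange ▸ hp)
  refine ⟨z, hz, q, hq, convexHull_mono ?_ hqz⟩
  rintro _ ⟨⟨y, hy⟩, hyz, rfl⟩
  exact mem_coe.2 (mem_erase.2 ⟨fun h ↦ hyz (Subtype.ext h), hy⟩)

end Convexity

section LowerFaces

/-- Over the convex hull of `S` the lower hull of the graph of `f` on `P` is spanned by the graph
of `f` on `S`, so `S` lies in a cell of the regular subdivision of `P` with heights `f`. For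
`f = (‖·‖ ^ 2)` these are the Delaunay cells of `P`. -/
def IsLowerFace {E : Type*} [AddCommGroup E] [Module ℝ E] (f : E → ℝ) (P S : Set E) : Prop :=
  ∀ ⦃y : E⦄ ⦃s t : ℝ⦄, (y, s) ∈ convexHull ℝ (S.graphOn f) →
    (y, t) ∈ convexHull ℝ (P.graphOn f) → s ≤ t

section Module

variable {E : Type*} [AddCommGroup E] [Module ℝ E] {f : E → ℝ} {P S T : Set E}

lemma IsLowerFace.mono (h : IsLowerFace f P S) (hTS : T ⊆ S) : IsLowerFace f P T :=
  fun _ _ _ hs ht ↦ h (convexHull_mono (Set.image_mono hTS) hs) ht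

lemma image_fst_convexHull_graphOn (f : E → ℝ) (P : Set E) :
    Prod.fst '' convexHull ℝ (P.graphOn f) = convexHull ℝ P := by
  have h := (LinearMap.fst ℝ E ℝ).image_convexHull (P.graphOn f)
  rwa [LinearMap.coe_fst, Set.image_fst_graphOn] at h

lemma exists_mem_convexHull_graphOn (f : E → ℝ) {x : E} (hx : x ∈ convexHull ℝ P) :
    ∃ t, (x, t) ∈ convexHull ℝ (P.graphOn f) := by
  simpa [← image_fst_convexHull_graphOn f P] using hx

end Module

section TopologicalSpace

variable {E : Type*} [AddCommGroup E] [Module ℝ E] [TopologicalSpace E] [IsTopologicalAddGroup E]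
  [ContinuousSMul ℝ E] [T1Space E] {x : E}

lemma exists_isLowerFace {P : Set E} (hP : P.Finite) (f : E → ℝ) (hx : x ∈ convexHull ℝ P) :
    ∃ S ⊆ P, x ∈ convexHull ℝ S ∧ IsLowerFace f P S := by
  obtain ⟨t₀, ht₀⟩ := exists_mem_convexHull_graphOn f hx
  have hcompact : IsCompact (convexHull ℝ (P.graphOn f) ∩ Prod.fst ⁻¹' {x}) :=
    ((hP.image _).isCompact_convexHull ℝ).inter_right (isClosed_singleton.preimage continuous_fst)
  obtain ⟨⟨x', t⟩, ⟨ht, rfl : x' = x⟩, hmin⟩ :=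
    hcompact.exists_isMinOn ⟨(x, t₀), ht₀, rfl⟩ continuous_snd.continuousOn
  obtain ⟨G, hGP, hxG, hG⟩ := exists_subset_forall_mem_openSegment ht
  have hgraph : (Prod.fst '' G).graphOn f = G := by
    rw [Set.graphOn, Set.image_image]
    refine (Set.image_congr fun y hy ↦ ?_).trans (Set.image_id' G)
    exact Prod.ext rfl (Set.mem_graphOn.1 (hGP hy)).2
  refine ⟨Prod.fst '' G, ?_, ?_, ?_⟩
  · exact (Set.image_mono hGP).trans (Set.image_fst_graphOn f P).subset
  · rw [← image_fst_convexHull_graphOn f, hgraph]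
    exact ⟨_, hxG, rfl⟩
  -- replacing `(q, s)` by a lower `(q, s')` would push `(x, t)` below the minimum
  · intro q s s' hs hs'
    rw [hgraph] at hs
    obtain ⟨⟨y, h⟩, hy, a, b, ha, hb, hab, hsum⟩ := hG _ hs
    obtain ⟨hfst, hsnd⟩ := Prod.ext_iff.1 hsum
    have hle : t ≤ a * s' + b * h := hmin
      ⟨convex_convexHull ℝ _ hs' (convexHull_mono hGP hy) ha.le hb.le hab, hfst⟩
    have hsnd' : a * s + b * h = t := hsnd
    exact le_of_mul_le_mul_left (by linarith) ha

lemma exists_affineIndependent_isLowerFace {P : Finset E} (f : E → ℝ)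
    (hx : x ∈ convexHull ℝ (P : Set E)) :
    ∃ S ⊆ P, AffineIndependent ℝ ((↑) : S → E) ∧ x ∈ convexHull ℝ (S : Set E) ∧
      IsLowerFace f P S := by
  obtain ⟨S₀, hS₀, hxS₀, hface⟩ := exists_isLowerFace P.finite_toSet f hx
  rw [convexHull_eq_union] at hxS₀
  simp only [Set.mem_iUnion] at hxS₀
  obtain ⟨S, hS, hind, hxS⟩ := hxS₀
  exact ⟨S, Finset.coe_subset.1 (hS.trans hS₀), hind, hxS, hface.mono hS⟩

end TopologicalSpace

end LowerFaces

section Delaunay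

variable {E : Type*} [NormedAddCommGroup E] [InnerProductSpace ℝ E]

lemma IsLowerFace.inter_closedBall_nonempty {P S : Set E} (h : IsLowerFace (‖·‖ ^ 2) P S)
    {q c : E} {r : ℝ} (hqP : q ∈ convexHull ℝ (closedBall c r ∩ P)) (hqS : q ∈ convexHull ℝ S) :
    (closedBall c r ∩ S).Nonempty := by
  by_contra! hempty
  obtain ⟨t, ht⟩ := exists_mem_convexHull_graphOn (fun e ↦ ‖e‖ ^ 2) hqP
  obtain ⟨s, hs⟩ := exists_mem_convexHull_graphOn (fun e ↦ ‖e‖ ^ 2) hqS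
  have hr : 0 ≤ r := by
    obtain ⟨e, he, -⟩ := convexHull_nonempty_iff.1 ⟨q, hqP⟩
    exact dist_nonneg.trans he
  -- on the paraboloid, `power` is the power of a point with respect to the sphere, up to a constant
  let power : E × ℝ →ₗ[ℝ] ℝ :=
    LinearMap.snd ℝ E ℝ - (2 : ℝ) • (innerₗ E c ∘ₗ LinearMap.fst ℝ E ℝ)
  have hpower (e : E) : power (e, ‖e‖ ^ 2) = dist e c ^ 2 - ‖c‖ ^ 2 := by
    simp only [power, LinearMap.sub_apply, LinearMap.smul_apply, LinearMap.comp_apply,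
      LinearMap.snd_apply, LinearMap.fst_apply, innerₗ_apply_apply, smul_eq_mul, dist_eq_norm,
      norm_sub_sq_real, real_inner_comm]
    ring
  have hin : power (q, t) ≤ r ^ 2 - ‖c‖ ^ 2 := by
    refine convexHull_min ?_ (convex_halfSpace_le power.isLinear _) ht
    rintro _ ⟨e, ⟨he, -⟩, rfl⟩
    have : dist e c ^ 2 ≤ r ^ 2 := pow_le_pow_left₀ dist_nonneg he 2
    simpa [hpower] using this
  have hout : r ^ 2 - ‖c‖ ^ 2 < power (q, s) := by
    refine convexHull_min ?_ (convex_halfSpace_gt power.isLinear _) hs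
    rintro _ ⟨e, he, rfl⟩
    have hec : r < dist e c := not_le.1 fun hec ↦ hempty.subset ⟨hec, he⟩
    have : r ^ 2 < dist e c ^ 2 := pow_lt_pow_left₀ hec hr two_ne_zero
    simpa [hpower] using this
  have hst : s ≤ t := h hs (convexHull_mono (Set.image_mono Set.inter_subset_right) ht)
  have : power (q, t) - power (q, s) = t - s := by simp [power]
  linarith

lemma IsLowerFace.mem_of_mem_convexHull {P S : Set E} (h : IsLowerFace (‖·‖ ^ 2) P S) {p : E}
    (hp : p ∈ P) (hpS : p ∈ convexHull ℝ S) : p ∈ S := by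
  have hp' : p ∈ convexHull ℝ (closedBall p 0 ∩ P) := subset_convexHull ℝ _ (by simpa)
  simpa using h.inter_closedBall_nonempty hp' hpS

end Delaunay

section Centerpoints

variable {E : Type*} [AddCommGroup E] [Module ℝ E]

/-- `x` is a centerpoint of `P`. The usual definition asks that closed half-spaces missing `x`
contain at most `d / (d + 1)` of the points, where `d` is the dimension; testing the convex hulls of
arbitrary subsets is equivalent and avoids separation arguments. -/
def IsCenterpoint (P : Finset E) (x : E) : Prop :=
  ∀ T : Set E, IsHeavy (finrank ℝ E / (finrank ℝ E + 1)) P T → x ∈ convexHull ℝ (T ∩ P)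

lemma IsCenterpoint.mem_convexHull {P : Finset E} (hP : P.Nonempty) {x : E}
    (hx : IsCenterpoint P x) : x ∈ convexHull ℝ (P : Set E) := by
  have huniv : IsHeavy (finrank ℝ E / (finrank ℝ E + 1)) P Set.univ := by
    rw [IsHeavy, Set.univ_inter, Set.ncard_coe_finset]
    have : (0 : ℝ) < #P := mod_cast hP.card_pos
    exact mul_lt_of_lt_one_left this ((div_lt_one (by positivity)).2 (lt_add_one _))
  simpa using hx Set.univ huniv

lemma exists_isCenterpoint [FiniteDimensional ℝ E] {P : Finset E} (hP : P.Nonempty) :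
    ∃ x, IsCenterpoint P x := by
  classical
  let heavy : Finset (Finset E) :=
    {T ∈ P.powerset | IsHeavy (finrank ℝ E / (finrank ℝ E + 1)) P (T : Set E)}
  obtain ⟨x, hx⟩ : (⋂ T ∈ heavy, convexHull ℝ (T : Set E)).Nonempty := by
    refine Convex.helly_theorem' (𝕜 := ℝ) (fun T _ ↦ convex_convexHull ℝ _) fun I hI hcard ↦ ?_
    obtain ⟨p, -, hp⟩ :=
      exists_mem_forall_mem_of_isHeavy hP hcard fun T hT ↦ (mem_filter.1 (hI hT)).2
    exact ⟨p, Set.mem_iInter₂.2 fun T hT ↦ subset_convexHull ℝ _ (hp T hT)⟩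
  refine ⟨x, fun T hT ↦ ?_⟩
  have hcoe : (({p ∈ P | p ∈ T} : Finset E) : Set E) = T ∩ P := by
    ext p
    simp [and_comm]
  have hmem : ({p ∈ P | p ∈ T} : Finset E) ∈ heavy :=
    mem_filter.2 ⟨mem_powerset.2 (filter_subset _ P), by
      rwa [IsHeavy, hcoe, Set.inter_assoc, Set.inter_self]⟩
  exact hcoe ▸ Set.mem_iInter₂.1 hx _ hmem

end Centerpoints

section Nets

variable {E : Type*} [NormedAddCommGroup E] [InnerProductSpace ℝ E] {P S : Finset E} {x : E}

/-- The closed balls of `E`, as a family of ranges for nets. It contains `∅`, the ball of any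
negative radius. -/
def closedBalls (E : Type*) [PseudoMetricSpace E] : Set (Set E) :=
  {D | ∃ c r, D = closedBall c r}

lemma IsCenterpoint.isStrongNet_of_isLowerFace (hx : IsCenterpoint P x) (hSP : S ⊆ P)
    (hxS : x ∈ convexHull ℝ (S : Set E)) (hface : IsLowerFace (‖·‖ ^ 2) (P : Set E) S) :
    IsStrongNet (finrank ℝ E / (finrank ℝ E + 1)) P S (closedBalls E) := by
  refine ⟨hSP, ?_⟩
  rintro _ ⟨c, r, rfl⟩ hheavy
  exact hface.inter_closedBall_nonempty (hx _ hheavy) hxS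

lemma IsCenterpoint.exists_isStrongNet_erase [FiniteDimensional ℝ E] [Nontrivial E]
    [DecidableEq E] (hx : IsCenterpoint P x) (hSP : S ⊆ P)
    (hind : AffineIndependent ℝ ((↑) : S → E)) (hcard : #S = finrank ℝ E + 1)
    (hxS : x ∈ convexHull ℝ (S : Set E)) (hface : IsLowerFace (‖·‖ ^ 2) (P : Set E) S) :
    ∃ z ∈ S, IsStrongNet (finrank ℝ E / (finrank ℝ E + 1)) P (S.erase z) (closedBalls E) := by
  by_contra! hnet
  have hmissed : ∀ z ∈ S, ∃ c r, IsHeavy (finrank ℝ E / (finrank ℝ E + 1)) P (closedBall c r) ∧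
      Disjoint (closedBall c r) (S.erase z : Set E) := by
    intro z hz
    by_contra! hhit
    refine hnet z hz ⟨(erase_subset z S).trans hSP, ?_⟩
    rintro _ ⟨c, r, rfl⟩ hheavy
    exact Set.not_disjoint_iff_nonempty_inter.1 (hhit c r hheavy)
  choose! c r hheavy hdisj using hmissed
  have hS : 1 < #S := by
    have := finrank_pos (R := ℝ) (M := E)
    lia
  have hP : P.Nonempty := (card_pos.1 (zero_lt_one.trans hS)).mono hSP
  obtain ⟨p, hpP, hp⟩ := exists_mem_forall_mem_of_isHeavy hP hcard.le hheavy
  have hpS : p ∉ S := fun hpS ↦ by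
    obtain ⟨z, hz, hzp⟩ := exists_mem_ne hS p
    exact Set.disjoint_left.1 (hdisj z hz) (hp z hz) (mem_coe.2 (mem_erase.2 ⟨hzp.symm, hpS⟩))
  obtain ⟨z, hz, q, hq, hqz⟩ := exists_mem_segment_mem_convexHull_erase hind hcard hxS
    fun h ↦ hpS (hface.mem_of_mem_convexHull hpP h)
  have hqD : q ∈ convexHull ℝ (closedBall (c z) (r z) ∩ P) :=
    (convex_convexHull ℝ _).segment_subset (hx _ (hheavy z hz))
      (subset_convexHull ℝ _ ⟨hp z hz, hpP⟩) hq
  have hfacet := hface.mono (coe_subset.2 (erase_subset z S))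
  exact Set.not_disjoint_iff_nonempty_inter.2 (hfacet.inter_closedBall_nonempty hqD hqz)
    (hdisj z hz)

end Nets

lemma exists_mem_mem_subset_pair {α : Type*} [DecidableEq α] {P Q : Finset α} (hP : P.Nonempty)
    (hQP : Q ⊆ P) (hQ : #Q ≤ 2) : ∃ a ∈ P, ∃ b ∈ P, Q ⊆ {a, b} := by
  obtain ⟨p, hp⟩ := hP
  interval_cases h : #Q
  · exact ⟨p, hp, p, hp, by simp [card_eq_zero.1 h]⟩
  · obtain ⟨a, rfl⟩ := card_eq_one.1 h
    exact ⟨a, hQP (by simp), a, hQP (by simp), by simp⟩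
  · obtain ⟨a, b, -, rfl⟩ := card_eq_two.1 h
    exact ⟨a, hQP (by simp), b, hQP (by simp), Subset.rfl⟩

theorem strong_two_thirds_net_size_two_disks_general {E : Type*} [NormedAddCommGroup E]
    [InnerProductSpace ℝ E] [FiniteDimensional ℝ E] [Nontrivial E] (P : Finset E) :
    ∃ Q : Finset E, #Q ≤ finrank ℝ E ∧
      IsStrongNet (finrank ℝ E / (finrank ℝ E + 1)) P Q (closedBalls E) := by
  classical
  obtain rfl | hP := P.eq_empty_or_nonempty
  · exact ⟨∅, by simp, Subset.rfl, fun T _ hT ↦ by simp [IsHeavy] at hT⟩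
  obtain ⟨x, hx⟩ := exists_isCenterpoint hP
  obtain ⟨S, hSP, hind, hxS, hface⟩ :=
    exists_affineIndependent_isLowerFace (‖·‖ ^ 2) (hx.mem_convexHull hP)
  have hS : #S ≤ finrank ℝ E + 1 := by
    simpa using hind.card_le_finrank_succ.trans (Nat.succ_le_succ (Submodule.finrank_le _))
  obtain hS | hS := Nat.le_succ_iff.1 hS
  · exact ⟨S, hS, hx.isStrongNet_of_isLowerFace hSP hxS hface⟩
  · obtain ⟨z, hz, hnet⟩ := hx.exists_isStrongNet_erase hSP hind hS hxS hface
    exact ⟨S.erase z, by rw [card_erase_of_mem hz, hS, Nat.succ_sub_one], hnet⟩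

/-- Every finite planar point set admits a strong (2/3)-net of size 2 with respect to
closed disks. -/
theorem strong_two_thirds_net_size_two_disks (P : Finset (EuclideanSpace ℝ (Fin 2)))
    (hP : P.Nonempty) :
    ∃ a ∈ P, ∃ b ∈ P, ∀ D : Set (EuclideanSpace ℝ (Fin 2)), IsDisk D →
      (2 / 3 : ℝ) * P.card < ((D ∩ ↑P).ncard : ℝ) → a ∈ D ∨ b ∈ D := by
  obtain ⟨Q, hcard, hQP, hQ⟩ := strong_two_thirds_net_size_two_disks_general P
  have hε : ((2 : ℕ) : ℝ) / ((2 : ℕ) + 1) = 2 / 3 := by norm_num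
  rw [finrank_euclideanSpace_fin] at hcard hQ
  rw [hε] at hQ
  obtain ⟨a, ha, b, hb, hab⟩ := exists_mem_mem_subset_pair hP hQP hcard
  refine ⟨a, ha, b, hb, ?_⟩
  rintro _ ⟨c, r, -, rfl⟩ hD
  obtain ⟨y, hyD, hyQ⟩ := hQ _ ⟨c, r, rfl⟩ hD
  obtain rfl | rfl : y = a ∨ y = b := by simpa using hab hyQ
  exacts [.inl hyD, .inr hyD]
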